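/- Let P_k be a homogeneous harmonic polynomial of degree k on ℝⁿ and α ∈ ℂ with Re α > -k-1. Then the dual Radon transform of the function (p, ω) ↦ |p|^α P_k(p ω) equals B(α, k) |x|^α P_k(x), where B(α, k) = 2^{-(α+k)} Γ(α+k+1) Γ(n/2) / (Γ((α+2)/2) Γ((α+2k+n)/2)). -/

import Mathlib

open MeasureTheory
open scoped RealInnerProductSpace

/-- The surface measure on the unit sphere `S^{n-1} ⊂ ℝⁿ`. -/
noncomputable def sphereMeasure (n : ℕ) :
    Measure (Metric.sphere (0 : EuclideanSpace ℝ (Fin n)) 1) :=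
  (volume : Measure (EuclideanSpace ℝ (Fin n))).toSphere

/-- The total area `A_n` of the unit sphere `S^{n-1}`. -/
noncomputable def sphereArea (n : ℕ) : ℝ := (sphereMeasure n Set.univ).toReal

/-- The dual Radon transform of a complex-valued function `φ(p, ω)`:
`S[φ](x) = (1/A_n) ∫_{S^{n-1}} φ(⟨x, ω⟩, ω) dω`. -/
noncomputable def dualRadonC (n : ℕ) (φ : ℝ → EuclideanSpace ℝ (Fin n) → ℂ)
    (x : EuclideanSpace ℝ (Fin n)) : ℂ :=
  (1 / (sphereArea n) : ℂ) *
    ∫ ω : Metric.sphere (0 : EuclideanSpace ℝ (Fin n)) 1,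
      φ ⟪x, (ω : EuclideanSpace ℝ (Fin n))⟫ (ω : EuclideanSpace ℝ (Fin n)) ∂(sphereMeasure n)

/-- The Laplacian of a complex-valued function on `ℝⁿ`. -/
noncomputable def laplacian {n : ℕ} (P : EuclideanSpace ℝ (Fin n) → ℂ)
    (x : EuclideanSpace ℝ (Fin n)) : ℂ :=
  ∑ i : Fin n,
    fderiv ℝ (fun y => fderiv ℝ P y (EuclideanSpace.single i (1 : ℝ))) x
      (EuclideanSpace.single i (1 : ℝ))

section SolidHarmonics

open scoped ContDiff

variable {n : ℕ}

/-- The directional derivative of `P` along the fixed vector `v`, as a function of the point. -/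
noncomputable def dirDeriv (v : EuclideanSpace ℝ (Fin n)) (P : EuclideanSpace ℝ (Fin n) → ℂ) :
    EuclideanSpace ℝ (Fin n) → ℂ :=
  fun y => fderiv ℝ P y v

/-- Smooth harmonic functions on `ℝⁿ` that are positively homogeneous of degree `k`. -/
structure IsSolidHarmonic (k : ℕ) (P : EuclideanSpace ℝ (Fin n) → ℂ) : Prop where
  contDiff : ContDiff ℝ ∞ P
  map_smul : ∀ r : ℝ, 0 < r → ∀ x, P (r • x) = (r : ℂ) ^ k * P x
  harmonic : ∀ x, laplacian P x = 0

theorem ContDiff.dirDeriv {P : EuclideanSpace ℝ (Fin n) → ℂ} (hP : ContDiff ℝ ∞ P)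
    (v : EuclideanSpace ℝ (Fin n)) : ContDiff ℝ ∞ (dirDeriv v P) :=
  (hP.fderiv_right (m := ∞) (by simp)).clm_apply contDiff_const

theorem dirDeriv_dirDeriv {P : EuclideanSpace ℝ (Fin n) → ℂ} (hP : ContDiff ℝ ∞ P)
    (v w x : EuclideanSpace ℝ (Fin n)) :
    dirDeriv v (dirDeriv w P) x = fderiv ℝ (fderiv ℝ P) x v w := by
  have h : DifferentiableAt ℝ (fderiv ℝ P) x :=
    (hP.fderiv_right (m := ∞) (by simp)).differentiable (by simp) x
  have := (h.hasFDerivAt.clm_apply (hasFDerivAt_const w x)).fderiv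
  change fderiv ℝ (fun y => fderiv ℝ P y w) x v = _
  rw [this]
  simp

theorem dirDeriv_comm {P : EuclideanSpace ℝ (Fin n) → ℂ} (hP : ContDiff ℝ ∞ P)
    (v w : EuclideanSpace ℝ (Fin n)) :
    dirDeriv v (dirDeriv w P) = dirDeriv w (dirDeriv v P) := by
  ext x
  rw [dirDeriv_dirDeriv hP, dirDeriv_dirDeriv hP]
  exact (hP.contDiffAt.isSymmSndFDerivAt (by simpa using ENat.LEInfty.out)).eq v w

theorem laplacian_eq_sum_orthonormalBasis {P : EuclideanSpace ℝ (Fin n) → ℂ}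
    (hP : ContDiff ℝ ∞ P)
    (b : OrthonormalBasis (Fin n) ℝ (EuclideanSpace ℝ (Fin n))) (x : EuclideanSpace ℝ (Fin n)) :
    laplacian P x = ∑ i, dirDeriv (b i) (dirDeriv (b i) P) x := by
  have key (c : OrthonormalBasis (Fin n) ℝ (EuclideanSpace ℝ (Fin n))) :
      ∑ i, dirDeriv (c i) (dirDeriv (c i) P) x = Laplacian.laplacian P x := by
    rw [InnerProductSpace.laplacian_eq_iteratedFDeriv_orthonormalBasis P c]
    simp [iteratedFDeriv_two_apply, dirDeriv_dirDeriv hP]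
  rw [key b, ← key (EuclideanSpace.basisFun (Fin n) ℝ)]
  simp [laplacian, dirDeriv]
  rfl

namespace IsSolidHarmonic

variable {k : ℕ} {P : EuclideanSpace ℝ (Fin n) → ℂ}

theorem differentiable (hP : IsSolidHarmonic k P) : Differentiable ℝ P :=
  hP.contDiff.differentiable (by simp)

theorem dirDeriv (hP : IsSolidHarmonic (k + 1) P) (v : EuclideanSpace ℝ (Fin n)) :
    IsSolidHarmonic k (dirDeriv v P) where
  contDiff := hP.contDiff.dirDeriv v
  map_smul r hr x := by
    have h1 : HasFDerivAt (fun y => P (r • y)) ((fderiv ℝ P (r • x)).comp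
        (r • ContinuousLinearMap.id ℝ (EuclideanSpace ℝ (Fin n)))) x :=
      (hP.differentiable (r • x)).hasFDerivAt.comp x ((hasFDerivAt_id x).const_smul r)
    have h2 : HasFDerivAt (fun y => P (r • y)) ((r : ℂ) ^ (k + 1) • fderiv ℝ P x) x := by
      simp_rw [hP.map_smul r hr]
      exact (hP.differentiable x).hasFDerivAt.const_mul _
    have h3 := congrArg (fun L => L v) (h1.unique h2)
    have hr' : (r : ℂ) ≠ 0 := by exact_mod_cast hr.ne'
    simp only [ContinuousLinearMap.comp_apply, smul_apply,
      ContinuousLinearMap.id_apply, _root_.map_smul, Complex.real_smul, smul_eq_mul] at h3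
    refine mul_left_cancel₀ hr' ?_
    simp only [_root_.dirDeriv]
    rw [h3]
    ring
  harmonic x := by
    have hc := hP.contDiff
    rw [laplacian_eq_sum_orthonormalBasis (hc.dirDeriv v) (EuclideanSpace.basisFun (Fin n) ℝ)]
    have h0 : (fun x => ∑ i, _root_.dirDeriv (EuclideanSpace.basisFun (Fin n) ℝ i)
        (_root_.dirDeriv (EuclideanSpace.basisFun (Fin n) ℝ i) P) x) = fun _ => 0 := by
      ext x
      rw [← laplacian_eq_sum_orthonormalBasis hc, hP.harmonic]
    have h1 := congrArg (fun F => fderiv ℝ F x v) h0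
    simp only [fderiv_const_apply, zero_apply] at h1
    rw [fderiv_fun_sum fun i _ =>
      ((hc.dirDeriv _).dirDeriv _).differentiable (by simp) x, sum_apply] at h1
    rw [← h1]
    refine Finset.sum_congr rfl fun i _ => ?_
    rw [dirDeriv_comm hc _ v, dirDeriv_comm (hc.dirDeriv _) _ v]
    rfl

/-- The Euler identity for homogeneous functions. -/
theorem natCast_mul_eq (hP : IsSolidHarmonic k P) (x : EuclideanSpace ℝ (Fin n)) :
    k * P x = fderiv ℝ P x x := by
  have h1 : HasDerivAt (fun r : ℝ => P (r • x)) (fderiv ℝ P x x) 1 := by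
    have h : HasFDerivAt P (fderiv ℝ P x) ((1 : ℝ) • x) := by
      simpa using (hP.differentiable x).hasFDerivAt
    simpa [Function.comp_def] using h.comp_hasDerivAt (1 : ℝ) ((hasDerivAt_id (1 : ℝ)).smul_const x)
  have h2 : HasDerivAt (fun r : ℝ => P (r • x)) (k * P x) 1 := by
    have h : HasDerivAt (fun r : ℝ => (r : ℂ) ^ k * P x) (k * P x) 1 := by
      simpa using ((Complex.ofRealCLM.hasDerivAt (x := 1)).pow k).mul_const (P x)
    refine h.congr_of_eventuallyEq ?_
    filter_upwards [lt_mem_nhds (zero_lt_one' ℝ)] with r hr using hP.map_smul r hr x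
  exact h2.unique h1

theorem eq_const (hP : IsSolidHarmonic 0 P) (x y : EuclideanSpace ℝ (Fin n)) : P x = P y := by
  suffices h : ∀ x, P x = P 0 by rw [h x, h y]
  intro x
  have h1 : Filter.Tendsto (fun r : ℝ => P (r • x)) (nhdsWithin 0 (Set.Ioi 0)) (nhds (P 0)) := by
    have : Continuous fun r : ℝ => P (r • x) := by
      have := hP.contDiff.continuous
      fun_prop
    simpa using (this.tendsto 0).mono_left nhdsWithin_le_nhds
  have h2 : Filter.Tendsto (fun r : ℝ => P (r • x)) (nhdsWithin 0 (Set.Ioi 0)) (nhds (P x)) := by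
    refine tendsto_const_nhds.congr' ?_
    filter_upwards [self_mem_nhdsWithin] with r hr
    simpa using (hP.map_smul r hr x).symm
  exact tendsto_nhds_unique h2 h1

theorem map_neg (hP : IsSolidHarmonic k P) (x : EuclideanSpace ℝ (Fin n)) :
    P (-x) = (-1) ^ k * P x := by
  induction k generalizing P with
  | zero => simpa using hP.eq_const (-x) x
  | succ k ih =>
    have h1 := hP.natCast_mul_eq (-x)
    have h2 := hP.natCast_mul_eq x
    have h3 := ih (hP.dirDeriv x)
    simp only [_root_.dirDeriv] at h3
    rw [_root_.map_neg, h3, ← h2] at h1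
    have hk : ((k + 1 : ℕ) : ℂ) ≠ 0 := by exact_mod_cast k.succ_ne_zero
    refine mul_left_cancel₀ hk ?_
    rw [h1]
    ring

theorem map_real_smul (hP : IsSolidHarmonic k P) {r : ℝ} (hr : r ≠ 0)
    (x : EuclideanSpace ℝ (Fin n)) : P (r • x) = (r : ℂ) ^ k * P x := by
  rcases hr.lt_or_gt with h | h
  · have := hP.map_smul (-r) (neg_pos.2 h) (-x)
    rw [hP.map_neg, ← mul_assoc, ← mul_pow] at this
    simpa using this
  · exact hP.map_smul r h x

theorem exists_norm_le (hP : IsSolidHarmonic k P) :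
    ∃ C : ℝ, ∀ x, ‖P x‖ ≤ C * (1 + ‖x‖) ^ k := by
  obtain ⟨C, hC⟩ := (isCompact_closedBall (0 : EuclideanSpace ℝ (Fin n)) 1).exists_bound_of_continuousOn
    hP.contDiff.continuous.continuousOn
  refine ⟨C, fun x => ?_⟩
  have hpos : 0 < 1 + ‖x‖ := by positivity
  have h := hP.map_smul (1 + ‖x‖) hpos ((1 + ‖x‖)⁻¹ • x)
  rw [smul_inv_smul₀ hpos.ne'] at h
  rw [h, norm_mul, norm_pow, Complex.norm_real, Real.norm_of_nonneg hpos.le, mul_comm]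
  gcongr
  refine hC _ ?_
  rw [mem_closedBall_zero_iff, norm_smul, norm_inv, Real.norm_of_nonneg hpos.le,
    inv_mul_le_iff₀ hpos]
  linarith

end IsSolidHarmonic

end SolidHarmonics

section Gaussian

variable {n : ℕ}

/-- Continuous functions on `ℝⁿ` of at most polynomial growth. -/
structure HasPolyGrowth (Q : EuclideanSpace ℝ (Fin n) → ℂ) : Prop where
  continuous : Continuous Q
  exists_norm_le : ∃ (C : ℝ) (m : ℕ), ∀ y, ‖Q y‖ ≤ C * (1 + ‖y‖) ^ m

/-- The Gaussian weight `exp (-|y|² / 2)`. -/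
noncomputable def gaussWeight (y : EuclideanSpace ℝ (Fin n)) : ℂ :=
  (Real.exp (-‖y‖ ^ 2 / 2) : ℝ)

theorem IsSolidHarmonic.hasPolyGrowth {k : ℕ} {P : EuclideanSpace ℝ (Fin n) → ℂ}
    (hP : IsSolidHarmonic k P) : HasPolyGrowth P :=
  ⟨hP.contDiff.continuous, hP.exists_norm_le.imp fun _ hC => ⟨k, hC⟩⟩

theorem IsSolidHarmonic.dirDeriv_eq_zero {P : EuclideanSpace ℝ (Fin n) → ℂ}
    (hP : IsSolidHarmonic 0 P) (v : EuclideanSpace ℝ (Fin n)) : _root_.dirDeriv v P = 0 := by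
  have : P = fun _ => P 0 := funext fun y => hP.eq_const y 0
  ext y
  rw [_root_.dirDeriv, this]
  simp

theorem IsSolidHarmonic.hasPolyGrowth_dirDeriv {k : ℕ} {P : EuclideanSpace ℝ (Fin n) → ℂ}
    (hP : IsSolidHarmonic k P) (v : EuclideanSpace ℝ (Fin n)) :
    HasPolyGrowth (_root_.dirDeriv v P) := by
  cases k with
  | zero =>
    rw [hP.dirDeriv_eq_zero v]
    exact ⟨continuous_const, 0, 0, by simp⟩
  | succ k => exact (hP.dirDeriv v).hasPolyGrowth

theorem HasPolyGrowth.inner_mul {Q : EuclideanSpace ℝ (Fin n) → ℂ} (hQ : HasPolyGrowth Q)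
    (v : EuclideanSpace ℝ (Fin n)) : HasPolyGrowth fun y => ((⟪v, y⟫ : ℝ) : ℂ) * Q y := by
  obtain ⟨hc, C, m, hC⟩ := hQ
  refine ⟨by fun_prop, ‖v‖ * C, m + 1, fun y => ?_⟩
  rw [norm_mul, Complex.norm_real]
  calc ‖(⟪v, y⟫ : ℝ)‖ * ‖Q y‖ ≤ (‖v‖ * (1 + ‖y‖)) * (C * (1 + ‖y‖) ^ m) := by
        gcongr
        · exact (norm_inner_le_norm v y).trans (by gcongr; linarith)
        · exact hC y
    _ = _ := by ring

theorem HasPolyGrowth.exists_norm_mul_exp_le {Q : EuclideanSpace ℝ (Fin n) → ℂ}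
    (hQ : HasPolyGrowth Q) :
    ∃ C : ℝ, ∀ y, ‖Q y * (Real.exp (-‖y‖ ^ 2 / 4) : ℝ)‖ ≤ C := by
  obtain ⟨-, C, m, hC⟩ := hQ
  have hC0 : 0 ≤ C := by simpa using (norm_nonneg _).trans (hC 0)
  refine ⟨C * m.factorial * Real.exp 2, fun y => ?_⟩
  rw [norm_mul, Complex.norm_real, Real.norm_of_nonneg (Real.exp_pos _).le]
  have h1 : (1 + ‖y‖) ^ m ≤ m.factorial * Real.exp (1 + ‖y‖) := by
    have := Real.pow_div_factorial_le_exp (1 + ‖y‖) (by positivity) m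
    rwa [div_le_iff₀ (by positivity), mul_comm] at this
  calc ‖Q y‖ * Real.exp (-‖y‖ ^ 2 / 4)
      ≤ (C * (m.factorial * Real.exp (1 + ‖y‖))) * Real.exp (-‖y‖ ^ 2 / 4) := by
        gcongr
        exact (hC y).trans (by gcongr)
    _ = C * m.factorial * Real.exp (1 + ‖y‖ + -‖y‖ ^ 2 / 4) := by
        rw [Real.exp_add (1 + ‖y‖)]; ring
    _ ≤ C * m.factorial * Real.exp 2 := by
        gcongr
        nlinarith [sq_nonneg (‖y‖ - 2)]

variable (b : OrthonormalBasis (Fin n) ℝ (EuclideanSpace ℝ (Fin n)))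

theorem measurePreserving_coordinates :
    MeasurePreserving (fun (y : EuclideanSpace ℝ (Fin n)) (i : Fin n) => (⟪b i, y⟫ : ℝ)) := by
  have := (PiLp.volume_preserving_ofLp (Fin n)).comp b.measurePreserving_repr
  have h : (fun (y : EuclideanSpace ℝ (Fin n)) (i : Fin n) => (⟪b i, y⟫ : ℝ)) =
      WithLp.ofLp ∘ b.repr := by
    funext y i
    simp [b.repr_apply_apply]
  rwa [h]

theorem measurableEmbedding_coordinates :
    MeasurableEmbedding
      (fun (y : EuclideanSpace ℝ (Fin n)) (i : Fin n) => (⟪b i, y⟫ : ℝ)) := by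
  have := (MeasurableEquiv.toLp 2 (Fin n → ℝ)).symm.measurableEmbedding.comp
    b.repr.toHomeomorph.measurableEmbedding
  convert this using 1
  ext y i
  simp [b.repr_apply_apply]

theorem integrable_prod_coordinates {g : Fin n → ℝ → ℂ} (hg : ∀ i, Integrable (g i)) :
    Integrable fun y : EuclideanSpace ℝ (Fin n) => ∏ i, g i ⟪b i, y⟫ :=
  (measurePreserving_coordinates b).integrable_comp_of_integrable (Integrable.fintype_prod hg)

theorem integral_prod_coordinates (g : Fin n → ℝ → ℂ) :
    ∫ y : EuclideanSpace ℝ (Fin n), ∏ i, g i ⟪b i, y⟫ = ∏ i, ∫ t, g i t := by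
  rw [← integral_fintype_prod_volume_eq_prod]
  exact (measurePreserving_coordinates b).integral_comp (measurableEmbedding_coordinates b)
    fun z => ∏ i, g i (z i)

theorem exp_norm_sq_eq_prod (c : ℝ) (y : EuclideanSpace ℝ (Fin n)) :
    ((Real.exp (-‖y‖ ^ 2 / c) : ℝ) : ℂ) =
      ∏ i, ((Real.exp (-(⟪b i, y⟫ : ℝ) ^ 2 / c) : ℝ) : ℂ) := by
  rw [← b.sum_sq_norm_inner_right y, ← Complex.ofReal_prod, ← Real.exp_sum]
  simp [Finset.sum_div, neg_div]

theorem ridge_mul_exp_eq_prod (i₀ : Fin n) (f : ℝ → ℂ) (c : ℝ) (y : EuclideanSpace ℝ (Fin n)) :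
    f ⟪b i₀, y⟫ * ((Real.exp (-‖y‖ ^ 2 / c) : ℝ) : ℂ) =
      ∏ i, (if i = i₀ then f ⟪b i, y⟫ else 1) *
        ((Real.exp (-(⟪b i, y⟫ : ℝ) ^ 2 / c) : ℝ) : ℂ) := by
  rw [Finset.prod_mul_distrib, ← exp_norm_sq_eq_prod]
  simp

theorem integrable_exp_neg_sq_div {c : ℝ} (hc : 0 < c) :
    Integrable fun t : ℝ => ((Real.exp (-t ^ 2 / c) : ℝ) : ℂ) := by
  have := (integrable_exp_neg_mul_sq (b := c⁻¹) (by positivity)).ofReal (𝕜 := ℂ)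
  refine this.congr (Filter.Eventually.of_forall fun t => ?_)
  simp only [RCLike.ofReal_eq_complex_ofReal]
  ring_nf

theorem integrable_ridge_mul_gaussWeight (i₀ : Fin n) {f : ℝ → ℂ}
    (hf : Integrable fun t : ℝ => f t * ((Real.exp (-t ^ 2 / 4) : ℝ) : ℂ))
    {Q : EuclideanSpace ℝ (Fin n) → ℂ} (hQ : HasPolyGrowth Q) :
    Integrable fun y => f ⟪b i₀, y⟫ * Q y * gaussWeight y := by
  have h1 : Integrable fun y : EuclideanSpace ℝ (Fin n) =>
      f ⟪b i₀, y⟫ * ((Real.exp (-‖y‖ ^ 2 / 4) : ℝ) : ℂ) := by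
    simp_rw [ridge_mul_exp_eq_prod]
    refine integrable_prod_coordinates b (g := fun i t => (if i = i₀ then f t else 1) *
        ((Real.exp (-t ^ 2 / 4) : ℝ) : ℂ)) fun i => ?_
    split_ifs
    · exact hf
    · simpa using integrable_exp_neg_sq_div four_pos
  obtain ⟨C, hC⟩ := hQ.exists_norm_mul_exp_le
  have hcont := hQ.continuous
  refine (h1.mul_bdd (c := C) (g := fun y => Q y * ((Real.exp (-‖y‖ ^ 2 / 4) : ℝ) : ℂ))
    (Continuous.aestronglyMeasurable (by fun_prop)) (Filter.Eventually.of_forall hC)).congr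
    (Filter.Eventually.of_forall fun y => ?_)
  have : gaussWeight y = ((Real.exp (-‖y‖ ^ 2 / 4) : ℝ) : ℂ) *
      ((Real.exp (-‖y‖ ^ 2 / 4) : ℝ) : ℂ) := by
    rw [gaussWeight, ← Complex.ofReal_mul, ← Real.exp_add]
    congr 2
    ring
  simp only [this]
  ring

theorem hasLineDerivAt_gaussWeight (y v : EuclideanSpace ℝ (Fin n)) :
    HasLineDerivAt ℝ gaussWeight (-((⟪v, y⟫ : ℝ) : ℂ) * gaussWeight y) y v := by
  have h : HasFDerivAt (fun y : EuclideanSpace ℝ (Fin n) => Real.exp (-‖y‖ ^ 2 / 2)) _ y :=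
    (((hasStrictFDerivAt_norm_sq y).hasFDerivAt.neg.mul_const (2⁻¹ : ℝ))).exp
  have h2 := (Complex.ofRealCLM.hasFDerivAt.comp y h).hasLineDerivAt v
  refine h2.congr_deriv ?_
  simp only [← real_inner_comm v y, gaussWeight]
  simp
  ring_nf

/-- Gaussian integration by parts in a direction orthogonal to the ridge direction `b i₀`. -/
theorem integral_ridge_mul_inner_mul_gaussWeight {i₀ j : Fin n} (hj : j ≠ i₀) {f : ℝ → ℂ}
    (hf : Integrable fun t : ℝ => f t * ((Real.exp (-t ^ 2 / 4) : ℝ) : ℂ))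
    {Q : EuclideanSpace ℝ (Fin n) → ℂ} (hQ : HasPolyGrowth Q) (hd : Differentiable ℝ Q)
    (hQ' : HasPolyGrowth (dirDeriv (b j) Q)) :
    ∫ y, f ⟪b i₀, y⟫ * (((⟪b j, y⟫ : ℝ) : ℂ) * Q y) * gaussWeight y =
      ∫ y, f ⟪b i₀, y⟫ * dirDeriv (b j) Q y * gaussWeight y := by
  have h1 := integrable_ridge_mul_gaussWeight b i₀ hf hQ
  have h2 := integrable_ridge_mul_gaussWeight b i₀ hf hQ'
  have h3 := integrable_ridge_mul_gaussWeight b i₀ hf (hQ.inner_mul (b j))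
  have key := integral_bilinear_hasLineDerivAt_right_eq_neg_left_of_integrable
    (μ := (volume : Measure (EuclideanSpace ℝ (Fin n)))) (v := b j)
    (B := ContinuousLinearMap.mul ℝ ℂ)
    (f := fun y => f ⟪b i₀, y⟫ * Q y) (f' := fun y => f ⟪b i₀, y⟫ * dirDeriv (b j) Q y)
    (g := gaussWeight) (g' := fun y => -((⟪b j, y⟫ : ℝ) : ℂ) * gaussWeight y)
    (by simpa using h2)
    (h3.neg.congr (Filter.Eventually.of_forall fun y => by simp; ring))
    (by simpa using h1)
    (fun y _ => by
      have h : HasLineDerivAt ℝ Q (dirDeriv (b j) Q y) y (b j) :=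
        (hd y).hasFDerivAt.hasLineDerivAt (b j)
      have h' := HasDerivAt.const_mul (f ⟪b i₀, y⟫) h
      refine h'.congr_of_eventuallyEq (Filter.Eventually.of_forall fun t => ?_)
      simp [inner_add_right, inner_smul_right, b.inner_eq_zero hj.symm])
    (fun y _ => hasLineDerivAt_gaussWeight y (b j))
  simp only [ContinuousLinearMap.mul_apply', neg_mul, mul_neg, integral_neg, neg_inj] at key
  rw [← key]
  congr 1
  ext y
  ring

theorem integral_ridge_mul_solidHarmonic_rec (i₀ : Fin n) {f : ℝ → ℂ}
    (hf : Integrable fun t : ℝ => f t * ((Real.exp (-t ^ 2 / 4) : ℝ) : ℂ))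
    {k : ℕ} {P : EuclideanSpace ℝ (Fin n) → ℂ} (hP : IsSolidHarmonic (k + 1) P) :
    ((k + 1 : ℕ) : ℂ) * ∫ y, f ⟪b i₀, y⟫ * P y * gaussWeight y =
      (∫ y, f ⟪b i₀, y⟫ * (((⟪b i₀, y⟫ : ℝ) : ℂ) * dirDeriv (b i₀) P y) * gaussWeight y) -
      ∫ y, f ⟪b i₀, y⟫ * dirDeriv (b i₀) (dirDeriv (b i₀) P) y * gaussWeight y := by
  have hD (j : Fin n) := hP.dirDeriv (b j)
  have hint1 (j : Fin n) := integrable_ridge_mul_gaussWeight b i₀ hf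
    ((hD j).hasPolyGrowth.inner_mul (b j))
  have hint2 (j : Fin n) := integrable_ridge_mul_gaussWeight b i₀ hf
    ((hD j).hasPolyGrowth_dirDeriv (b j))
  have euler (y : EuclideanSpace ℝ (Fin n)) :
      ((k + 1 : ℕ) : ℂ) * P y = ∑ j, ((⟪b j, y⟫ : ℝ) : ℂ) * dirDeriv (b j) P y := by
    rw [hP.natCast_mul_eq]
    conv_lhs => arg 2; rw [← b.sum_repr y]
    simp [b.repr_apply_apply, dirDeriv]
  have hlap (y : EuclideanSpace ℝ (Fin n)) :
      ∑ j, dirDeriv (b j) (dirDeriv (b j) P) y = 0 := by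
    rw [← laplacian_eq_sum_orthonormalBasis hP.contDiff, hP.harmonic]
  have hsum1 : ((k + 1 : ℕ) : ℂ) * ∫ y, f ⟪b i₀, y⟫ * P y * gaussWeight y =
      ∑ j, ∫ y, f ⟪b i₀, y⟫ * (((⟪b j, y⟫ : ℝ) : ℂ) * dirDeriv (b j) P y) * gaussWeight y := by
    rw [← integral_finsetSum _ fun j _ => hint1 j, ← integral_const_mul]
    congr 1
    ext y
    rw [← Finset.sum_mul, ← Finset.mul_sum, ← euler]
    ring
  have hsum2 : ∑ j, ∫ y, f ⟪b i₀, y⟫ * dirDeriv (b j) (dirDeriv (b j) P) y * gaussWeight y = 0 := by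
    rw [← integral_finsetSum _ fun j _ => hint2 j]
    simp_rw [← Finset.sum_mul, ← Finset.mul_sum, hlap]
    simp
  rw [← Finset.add_sum_erase _ _ (Finset.mem_univ i₀)] at hsum1 hsum2
  rw [hsum1, Finset.sum_congr rfl fun j hj => integral_ridge_mul_inner_mul_gaussWeight b
    (Finset.ne_of_mem_erase hj) hf (hD j).hasPolyGrowth (hD j).differentiable
    ((hD j).hasPolyGrowth_dirDeriv (b j)), eq_neg_of_add_eq_zero_right hsum2]
  ring

end Gaussian

section RidgeMoments

open Complex in
theorem integral_Ioi_cpow_mul_exp_neg_sq {s : ℂ} (hs : 0 < s.re) :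
    ∫ r : ℝ in Set.Ioi 0, (r : ℂ) ^ (s - 1) * ((Real.exp (-r ^ 2 / 2) : ℝ) : ℂ) =
      2 ^ (s / 2 - 1) * Gamma (s / 2) := by
  have h1 := mellin_comp_rpow (fun u : ℝ => ((Real.exp (-u / 2) : ℝ) : ℂ)) s 2
  simp only [mellin, smul_eq_mul, Real.rpow_two, Complex.ofReal_ofNat] at h1
  rw [h1]
  have h2 := integral_cpow_mul_exp_neg_mul_Ioi (a := s / 2) (r := 1 / 2) (by simpa using hs)
    (by norm_num)
  have h3 : ∀ t : ℝ, ((Real.exp (-t / 2) : ℝ) : ℂ) = exp (-(((1 / 2 : ℝ) : ℂ) * t)) := by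
    intro t
    push_cast
    ring_nf
  simp_rw [h3, h2]
  rw [cpow_sub _ _ two_ne_zero, cpow_one]
  simp
  ring

/-- The function `t ↦ |t| ^ α * t ^ k` on the real line. -/
noncomputable def absPow (α : ℂ) (k : ℕ) (t : ℝ) : ℂ := ((|t| : ℝ) : ℂ) ^ α * (t : ℂ) ^ k

theorem absPow_succ_mul_self (α : ℂ) (k : ℕ) {t : ℝ} (ht : t ≠ 0) :
    absPow α (k + 1) t * t = absPow (α + 2) k t := by
  have h : ((|t| : ℝ) : ℂ) ≠ 0 := by exact_mod_cast abs_ne_zero.2 ht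
  have h2 : ((|t| : ℝ) : ℂ) ^ 2 = (t : ℂ) ^ 2 := by exact_mod_cast sq_abs t
  rw [absPow, absPow, Complex.cpow_add _ _ h, Complex.cpow_ofNat, h2]
  ring

theorem measurable_absPow (α : ℂ) (k : ℕ) : Measurable (absPow α k) := by
  unfold absPow
  fun_prop

theorem norm_absPow_le (α : ℂ) (k : ℕ) (t : ℝ) : ‖absPow α k t‖ ≤ |t| ^ (α.re + k) := by
  rw [absPow, norm_mul, norm_pow, Complex.norm_real, Real.norm_eq_abs]
  rcases eq_or_ne t 0 with rfl | ht
  · rcases eq_or_ne α 0 with rfl | hα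
    · rcases eq_or_ne k 0 with rfl | hk <;> simp [*]
    · simp only [abs_zero, Complex.ofReal_zero, Complex.zero_cpow hα, norm_zero, zero_mul]
      positivity
  · have h := abs_pos.2 ht
    rw [Complex.norm_cpow_eq_rpow_re_of_pos h, Real.rpow_add h, Real.rpow_natCast]

theorem integrable_absPow_mul_exp {α : ℂ} {k : ℕ} (h : -(k : ℝ) - 1 < α.re) {c : ℝ}
    (hc : 0 < c) :
    Integrable fun t : ℝ => absPow α k t * ((Real.exp (-t ^ 2 / c) : ℝ) : ℂ) := by
  have h1 : Integrable fun t : ℝ => ‖t‖ ^ (α.re + k) * Real.exp (-‖t‖ ^ 2 / c) := by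
    rw [integrable_fun_norm_addHaar (volume : Measure ℝ)
      (f := fun r => r ^ (α.re + k) * Real.exp (-r ^ 2 / c))]
    have := integrableOn_rpow_mul_exp_neg_mul_sq (b := c⁻¹) (by positivity)
      (s := α.re + k) (by linarith)
    simpa [div_eq_inv_mul] using this
  refine h1.mono' ?_ (Filter.Eventually.of_forall fun t => ?_)
  · have := measurable_absPow α k
    exact Measurable.aestronglyMeasurable (by fun_prop)
  · rw [norm_mul, Complex.norm_real, Real.norm_of_nonneg (Real.exp_pos _).le, Real.norm_eq_abs,
      sq_abs]
    gcongr
    exact norm_absPow_le α k t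

theorem integral_abs_cpow_mul_exp {α : ℂ} (h : -1 < α.re) :
    ∫ t : ℝ, absPow α 0 t * ((Real.exp (-t ^ 2 / 2) : ℝ) : ℂ) =
      2 ^ ((α + 1) / 2) * Complex.Gamma ((α + 1) / 2) := by
  have h1 := integral_fun_norm_addHaar (volume : Measure ℝ)
    fun r => (r : ℂ) ^ α * ((Real.exp (-r ^ 2 / 2) : ℝ) : ℂ)
  have h2 := integral_Ioi_cpow_mul_exp_neg_sq (s := α + 1) (by simp; linarith)
  simp only [add_sub_cancel_right] at h2
  simp only [Real.norm_eq_abs, sq_abs, Module.finrank_self, Nat.sub_self, pow_zero, one_smul, h2,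
    Real.volume_real_ball zero_le_one] at h1
  simp only [absPow, pow_zero, mul_one]
  rw [h1, Complex.cpow_sub _ _ two_ne_zero, Complex.cpow_one]
  simp
  ring

/-- The normalised Gaussian moment of `|t| ^ α * t ^ k` against a solid harmonic of degree `k`. -/
noncomputable def ridgeMoment (k : ℕ) (α : ℂ) : ℂ :=
  Complex.Gamma (α + k + 1) * 2 ^ ((1 - α) / 2) * (√Real.pi : ℝ) * (Complex.Gamma ((α + 2) / 2))⁻¹

theorem ridgeMoment_zero {α : ℂ} (h : -1 < α.re) :
    2 ^ ((α + 1) / 2) * Complex.Gamma ((α + 1) / 2) = ridgeMoment 0 α := by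
  have hne : Complex.Gamma ((α + 2) / 2) ≠ 0 :=
    Complex.Gamma_ne_zero_of_re_pos (by simp; linarith)
  have hd := Complex.Gamma_mul_Gamma_add_half ((α + 1) / 2)
  rw [show (α + 1) / 2 + 1 / 2 = (α + 2) / 2 by ring,
    show 2 * ((α + 1) / 2) = α + 1 by ring] at hd
  rw [ridgeMoment, eq_mul_inv_iff_mul_eq₀ hne, mul_assoc, hd]
  have : (2 : ℂ) ^ ((1 - α) / 2) = 2 ^ ((α + 1) / 2) * 2 ^ (1 - (α + 1)) := by
    rw [← Complex.cpow_add _ _ two_ne_zero]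
    congr 1
    ring
  rw [this]
  simp
  ring

theorem two_mul_two_cpow (α : ℂ) :
    2 * (2 : ℂ) ^ ((1 - (α + 2)) / 2) = 2 ^ ((1 - α) / 2) := by
  rw [show (1 - α) / 2 = 1 + (1 - (α + 2)) / 2 by ring, Complex.cpow_add _ _ two_ne_zero,
    Complex.cpow_one]

theorem inv_Gamma_half (α : ℂ) : (Complex.Gamma ((α + 2) / 2))⁻¹ =
    (α + 2) / 2 * (Complex.Gamma ((α + 2 + 2) / 2))⁻¹ := by
  rw [Complex.one_div_Gamma_eq_self_mul_one_div_Gamma_add_one]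
  ring_nf

theorem ridgeMoment_one {α : ℂ} (h : α + 2 ≠ 0) : ridgeMoment 0 (α + 2) = ridgeMoment 1 α := by
  have h1 : Complex.Gamma (α + 2 + 1) = (α + 2) * Complex.Gamma (α + 2) :=
    Complex.Gamma_add_one _ h
  rw [ridgeMoment, ridgeMoment, inv_Gamma_half α, ← two_mul_two_cpow α]
  rw [show α + 2 + ((0 : ℕ) : ℂ) + 1 = α + 2 + 1 by simp, h1,
    show α + ((1 : ℕ) : ℂ) + 1 = α + 2 by push_cast; ring]
  ring

theorem ridgeMoment_add_two {α : ℂ} {k : ℕ} (h : α + k + 3 ≠ 0) :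
    ridgeMoment (k + 1) (α + 2) - (k + 1) * ridgeMoment k (α + 2) = ridgeMoment (k + 2) α := by
  have h1 : Complex.Gamma (α + k + 3 + 1) = (α + k + 3) * Complex.Gamma (α + k + 3) :=
    Complex.Gamma_add_one _ h
  rw [ridgeMoment, ridgeMoment, ridgeMoment, inv_Gamma_half α, ← two_mul_two_cpow α]
  rw [show α + 2 + ((k + 1 : ℕ) : ℂ) + 1 = α + k + 3 + 1 by push_cast; ring, h1,
    show α + ((k + 2 : ℕ) : ℂ) + 1 = α + k + 3 by push_cast; ring,
    show α + 2 + (k : ℂ) + 1 = α + k + 3 by ring]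
  ring

variable {n : ℕ} (b : OrthonormalBasis (Fin n) ℝ (EuclideanSpace ℝ (Fin n)))

theorem ae_inner_ne_zero (i : Fin n) :
    ∀ᵐ y : EuclideanSpace ℝ (Fin n), (⟪b i, y⟫ : ℝ) ≠ 0 :=
  ((Measure.quasiMeasurePreserving_eval (fun _ => (volume : Measure ℝ)) i).comp
    (measurePreserving_coordinates b).quasiMeasurePreserving).ae (Measure.ae_ne volume 0)

/-- The `(n-1)`-dimensional Gaussian integral. -/
noncomputable def gaussConst (n : ℕ) : ℂ :=
  (∫ t : ℝ, ((Real.exp (-t ^ 2 / 2) : ℝ) : ℂ)) ^ (n - 1)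

theorem gaussConst_ne_zero (n : ℕ) : gaussConst n ≠ 0 := by
  refine pow_ne_zero _ ?_
  have h := integral_gaussian (1 / 2)
  rw [integral_complex_ofReal]
  have h2 : ∫ t : ℝ, Real.exp (-t ^ 2 / 2) = √(Real.pi / (1 / 2)) := by
    rw [← h]
    congr 1
    ext t
    ring_nf
  rw [h2]
  have : 0 < √(Real.pi / (1 / 2)) := by positivity
  exact_mod_cast this.ne'

theorem integral_absPow_mul_gaussWeight (i₀ : Fin n) {α : ℂ} (h : -1 < α.re) :
    ∫ y, absPow α 0 ⟪b i₀, y⟫ * gaussWeight y = ridgeMoment 0 α * gaussConst n := by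
  simp_rw [gaussWeight, ridge_mul_exp_eq_prod]
  rw [integral_prod_coordinates b (fun i t => (if i = i₀ then absPow α 0 t else 1) *
        ((Real.exp (-t ^ 2 / 2) : ℝ) : ℂ)), ← Finset.mul_prod_erase _ _ (Finset.mem_univ i₀),
    Finset.prod_congr rfl (g := fun _ => ∫ t : ℝ, ((Real.exp (-t ^ 2 / 2) : ℝ) : ℂ)) fun i hi => by
      simp only [if_neg (Finset.ne_of_mem_erase hi), one_mul]]
  simp only [if_true, integral_abs_cpow_mul_exp h, ridgeMoment_zero h, Finset.prod_const,
    Finset.card_erase_of_mem (Finset.mem_univ i₀), Finset.card_univ, Fintype.card_fin, gaussConst]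

theorem integral_absPow_mul_solidHarmonic (i₀ : Fin n) (k : ℕ) {α : ℂ}
    (h : -(k : ℝ) - 1 < α.re) {P : EuclideanSpace ℝ (Fin n) → ℂ} (hP : IsSolidHarmonic k P) :
    ∫ y, absPow α k ⟪b i₀, y⟫ * P y * gaussWeight y =
      P (b i₀) * ridgeMoment k α * gaussConst n := by
  have hrec {k : ℕ} {α : ℂ} (h : -((k + 1 : ℕ) : ℝ) - 1 < α.re)
      {P : EuclideanSpace ℝ (Fin n) → ℂ} (hP : IsSolidHarmonic (k + 1) P) :
      ((k + 1 : ℕ) : ℂ) * ∫ y, absPow α (k + 1) ⟪b i₀, y⟫ * P y * gaussWeight y =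
      (∫ y, absPow (α + 2) k ⟪b i₀, y⟫ * dirDeriv (b i₀) P y * gaussWeight y) -
      ∫ y, absPow α (k + 1) ⟪b i₀, y⟫ * dirDeriv (b i₀) (dirDeriv (b i₀) P) y *
        gaussWeight y := by
    rw [integral_ridge_mul_solidHarmonic_rec b i₀ (integrable_absPow_mul_exp h four_pos) hP]
    congr 1
    refine integral_congr_ae ?_
    filter_upwards [ae_inner_ne_zero b i₀] with y hy
    rw [← absPow_succ_mul_self α k hy]
    ring
  have heuler {k : ℕ} {P : EuclideanSpace ℝ (Fin n) → ℂ} (hP : IsSolidHarmonic k P) :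
      dirDeriv (b i₀) P (b i₀) = k * P (b i₀) := (hP.natCast_mul_eq (b i₀)).symm
  induction k using Nat.twoStepInduction generalizing α P with
  | zero =>
    have h0 : -1 < α.re := by simpa using h
    simp_rw [fun y => hP.eq_const y (b i₀), mul_right_comm _ (P (b i₀)), integral_mul_const,
      integral_absPow_mul_gaussWeight b i₀ h0]
    ring
  | one =>
    have h1 := hrec (k := 0) h hP
    have h0 : -1 < (α + 2).re := by norm_num at h ⊢; linarith
    have hne : α + 2 ≠ 0 := fun h' => by
      have := congrArg Complex.re h'
      norm_num at this h
      linarith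
    have hD := hP.dirDeriv (b i₀)
    simp_rw [hD.dirDeriv_eq_zero, fun y => hD.eq_const y (b i₀),
      mul_right_comm _ (dirDeriv (b i₀) P (b i₀)), integral_mul_const,
      integral_absPow_mul_gaussWeight b i₀ h0, heuler hP, ridgeMoment_one hne] at h1
    simp at h1
    rw [h1]
    ring
  | more k ih0 ih1 =>
    have h1 := hrec h hP
    have hre : (α + 2).re = α.re + 2 := by simp
    push_cast at h
    have hne : α + k + 3 ≠ 0 := fun h' => by
      have := congrArg Complex.re h'
      simp at this
      linarith
    have hD := hP.dirDeriv (b i₀)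
    have hDD := hD.dirDeriv (b i₀)
    have h2 : ∫ y, absPow α (k + 1 + 1) ⟪b i₀, y⟫ * dirDeriv (b i₀) (dirDeriv (b i₀) P) y *
        gaussWeight y = ∫ y, absPow (α + 2) k ⟪b i₀, y⟫ *
          dirDeriv (b i₀) (dirDeriv (b i₀) P) y * gaussWeight y := by
      refine integral_congr_ae ?_
      filter_upwards [ae_inner_ne_zero b i₀] with y hy
      rw [← absPow_succ_mul_self α k hy, absPow, absPow]
      ring
    rw [h2, ih1 (by push_cast; linarith) hD, ih0 (by linarith) hDD, heuler hD, heuler hP] at h1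
    have hk : ((k + 1 + 1 : ℕ) : ℂ) ≠ 0 := by exact_mod_cast (k + 1).succ_ne_zero
    refine mul_left_cancel₀ hk ?_
    rw [h1, ← ridgeMoment_add_two hne]
    push_cast
    ring

end RidgeMoments

section Sphere

variable {n : ℕ}

theorem absPow_mul (α : ℂ) (k : ℕ) {r : ℝ} (hr : 0 < r) (t : ℝ) :
    absPow α k (r * t) = (r : ℂ) ^ (α + k) * absPow α k t := by
  have h : (r : ℂ) ≠ 0 := by exact_mod_cast hr.ne'
  rw [absPow, absPow, abs_mul, abs_of_pos hr, Complex.ofReal_mul, Complex.ofReal_mul,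
    Complex.mul_cpow_ofReal_nonneg hr.le (abs_nonneg t), mul_pow, Complex.cpow_add _ _ h,
    Complex.cpow_natCast]
  ring

theorem integral_ridge_eq_sphere_mul (hn : 2 ≤ n) {k : ℕ} {α : ℂ} (h : -(k : ℝ) - 1 < α.re)
    {P : EuclideanSpace ℝ (Fin n) → ℂ}
    (hP : ∀ r : ℝ, 0 < r → ∀ x, P (r • x) = (r : ℂ) ^ k * P x) (x : EuclideanSpace ℝ (Fin n)) :
    ∫ y, absPow α k ⟪x, y⟫ * P y * gaussWeight y =
      (∫ ω : Metric.sphere (0 : EuclideanSpace ℝ (Fin n)) 1,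
        absPow α k ⟪x, (ω : EuclideanSpace ℝ (Fin n))⟫ * P ω ∂(sphereMeasure n)) *
      (2 ^ ((α + 2 * k + n) / 2 - 1) * Complex.Gamma ((α + 2 * k + n) / 2)) := by
  have hnR : (2 : ℝ) ≤ n := by exact_mod_cast hn
  have : Nontrivial (Fin n) := Fin.nontrivial_iff_two_le.2 hn
  have hdim : Module.finrank ℝ (EuclideanSpace ℝ (Fin n)) - 1 = n - 1 := by simp
  have hk : (0 : ℝ) ≤ k := k.cast_nonneg
  set s : ℂ := α + 2 * k + n with hs
  have hsre : 0 < s.re := by simp [hs]; linarith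
  have hmp :=
    (volume : Measure (EuclideanSpace ℝ (Fin n))).measurePreserving_homeomorphUnitSphereProd
  calc
    _ = ∫ y : ({(0)}ᶜ : Set (EuclideanSpace ℝ (Fin n))),
        absPow α k ⟪x, y.1⟫ * P y * gaussWeight y.1 ∂(volume.comap Subtype.val) := by
      rw [integral_subtype_comap (measurableSet_singleton _).compl
        fun y : EuclideanSpace ℝ (Fin n) => absPow α k ⟪x, y⟫ * P y * gaussWeight y,
        restrict_compl_singleton]
    _ = ∫ q : Metric.sphere (0 : EuclideanSpace ℝ (Fin n)) 1 × Set.Ioi (0 : ℝ),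
          (absPow α k ⟪x, (q.1 : EuclideanSpace ℝ (Fin n))⟫ * P q.1) *
          (((q.2 : ℝ) : ℂ) ^ (α + 2 * k) * ((Real.exp (-(q.2 : ℝ) ^ 2 / 2) : ℝ) : ℂ))
        ∂(sphereMeasure n).prod (.volumeIoiPow (n - 1)) := by
      rw [hdim] at hmp
      rw [sphereMeasure, ← hmp.integral_comp (Homeomorph.measurableEmbedding _)]
      congr 1
      ext y
      have hy : 0 < ‖y.1‖ := norm_pos_iff.2 y.2
      have hyC : ((‖y.1‖ : ℝ) : ℂ) ≠ 0 := by exact_mod_cast hy.ne'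
      obtain ⟨u, hu⟩ : ∃ u : EuclideanSpace ℝ (Fin n), u = ‖y.1‖⁻¹ • y.1 := ⟨_, rfl⟩
      have hyu : y.1 = ‖y.1‖ • u := by rw [hu, smul_inv_smul₀ hy.ne']
      simp only [homeomorphUnitSphereProd_apply_fst_coe, homeomorphUnitSphereProd_apply_snd_coe,
        ← hu, gaussWeight]
      have h1 : absPow α k ⟪x, y.1⟫ * P y =
          (‖y.1‖ : ℂ) ^ (α + 2 * k) * (absPow α k ⟪x, u⟫ * P u) := by
        generalize ‖y.1‖ = r at hy hyu hyC
        rw [hyu, inner_smul_right, absPow_mul α k hy, hP r hy,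
          show α + 2 * (k : ℂ) = α + k + k by ring, Complex.cpow_add (α + k) _ hyC,
          Complex.cpow_natCast]
        ring
      rw [h1]
      ring
    _ = (∫ ω : Metric.sphere (0 : EuclideanSpace ℝ (Fin n)) 1,
          absPow α k ⟪x, ω.1⟫ * P ω ∂(sphereMeasure n)) *
        ∫ r : Set.Ioi (0 : ℝ), ((r : ℝ) : ℂ) ^ (α + 2 * k) *
          ((Real.exp (-(r : ℝ) ^ 2 / 2) : ℝ) : ℂ) ∂.volumeIoiPow (n - 1) := by
      have : SigmaFinite (sphereMeasure n) := by unfold sphereMeasure; infer_instance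
      exact integral_prod_mul (fun ω : Metric.sphere (0 : EuclideanSpace ℝ (Fin n)) 1 =>
          absPow α k ⟪x, ω.1⟫ * P ω)
        (fun r : Set.Ioi (0 : ℝ) => ((r : ℝ) : ℂ) ^ (α + 2 * k) *
          ((Real.exp (-(r : ℝ) ^ 2 / 2) : ℝ) : ℂ))
    _ = _ := by
      congr 1
      rw [← integral_Ioi_cpow_mul_exp_neg_sq hsre]
      simp only [Measure.volumeIoiPow, ENNReal.ofReal]
      rw [integral_withDensity_eq_integral_smul,
        integral_subtype_comap measurableSet_Ioi fun r : ℝ => Real.toNNReal (r ^ (n - 1)) •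
          ((r : ℂ) ^ (α + 2 * k) * ((Real.exp (-r ^ 2 / 2) : ℝ) : ℂ))]
      · refine setIntegral_congr_fun measurableSet_Ioi fun r hr => ?_
        have hr0 : (r : ℂ) ≠ 0 := by exact_mod_cast (ne_of_gt hr : r ≠ 0)
        have hcast : s - 1 = α + 2 * k + ((n - 1 : ℕ) : ℂ) := by
          rw [hs, Nat.cast_sub (by omega)]
          push_cast
          ring
        rw [NNReal.smul_def, Real.coe_toNNReal _ (pow_nonneg (le_of_lt hr) _), hcast,
          Complex.cpow_add (α + 2 * k) _ hr0, Complex.cpow_natCast, Complex.real_smul]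
        push_cast
        ring
      · exact (measurable_subtype_coe.pow_const _).real_toNNReal

theorem exists_orthonormalBasis_apply_eq {u : EuclideanSpace ℝ (Fin n)} (hu : ‖u‖ = 1)
    (i : Fin n) : ∃ b : OrthonormalBasis (Fin n) ℝ (EuclideanSpace ℝ (Fin n)), b i = u := by
  have h : Orthonormal ℝ (({i} : Set (Fin n)).domRestrict fun _ => u) :=
    ⟨fun _ => hu, fun a c hac => (hac (Subsingleton.elim a c)).elim⟩
  obtain ⟨b, hb⟩ := h.exists_orthonormalBasis_extension_of_card_eq (by simp)
  exact ⟨b, hb i rfl⟩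

theorem integral_sphere_absPow_mul_solidHarmonic (hn : 2 ≤ n) {k : ℕ} {α : ℂ}
    (h : -(k : ℝ) - 1 < α.re) {P : EuclideanSpace ℝ (Fin n) → ℂ} (hP : IsSolidHarmonic k P)
    {u : EuclideanSpace ℝ (Fin n)} (hu : ‖u‖ = 1) :
    (∫ ω : Metric.sphere (0 : EuclideanSpace ℝ (Fin n)) 1,
        absPow α k ⟪u, (ω : EuclideanSpace ℝ (Fin n))⟫ * P ω ∂(sphereMeasure n)) *
      (2 ^ ((α + 2 * k + n) / 2 - 1) * Complex.Gamma ((α + 2 * k + n) / 2)) =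
      P u * ridgeMoment k α * gaussConst n := by
  obtain ⟨b, hb⟩ := exists_orthonormalBasis_apply_eq hu ⟨0, by omega⟩
  rw [← integral_ridge_eq_sphere_mul hn h hP.map_smul, ← hb,
    integral_absPow_mul_solidHarmonic b _ k h hP]

theorem isSolidHarmonic_one : IsSolidHarmonic 0 fun _ : EuclideanSpace ℝ (Fin n) => (1 : ℂ) where
  contDiff := contDiff_const
  map_smul := by simp
  harmonic := by simp [laplacian]

theorem sphereArea_mul (hn : 2 ≤ n) :
    (sphereArea n : ℂ) * (2 ^ ((n : ℂ) / 2 - 1) * Complex.Gamma ((n : ℂ) / 2)) =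
      2 ^ (1 / 2 : ℂ) * (√Real.pi : ℝ) * gaussConst n := by
  have h := integral_sphere_absPow_mul_solidHarmonic hn (α := 0) (k := 0) (by simp)
    isSolidHarmonic_one (u := EuclideanSpace.single (⟨0, by omega⟩ : Fin n) 1) (by simp)
  simpa [absPow, ridgeMoment, sphereArea, Measure.real] using h

theorem sphereArea_ne_zero (hn : 2 ≤ n) : (sphereArea n : ℂ) ≠ 0 := by
  refine left_ne_zero_of_mul (b := 2 ^ ((n : ℂ) / 2 - 1) * Complex.Gamma ((n : ℂ) / 2)) ?_
  rw [sphereArea_mul hn]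
  have : (0 : ℝ) < √Real.pi := by positivity
  have hpi : ((√Real.pi : ℝ) : ℂ) ≠ 0 := by exact_mod_cast this.ne'
  exact mul_ne_zero (mul_ne_zero (by simp [Complex.cpow_eq_zero_iff]) hpi) (gaussConst_ne_zero n)

theorem dualRadonC_of_norm_eq_one (hn : 2 ≤ n) {k : ℕ} {α : ℂ}
    (h : -(k : ℝ) - 1 < α.re) {P : EuclideanSpace ℝ (Fin n) → ℂ} (hP : IsSolidHarmonic k P)
    {u : EuclideanSpace ℝ (Fin n)} (hu : ‖u‖ = 1) :
    dualRadonC n (fun p ω => absPow α k p * P ω) u =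
      (2 ^ (-(α + k)) * Complex.Gamma (α + k + 1) * Complex.Gamma ((n : ℂ) / 2) /
        (Complex.Gamma ((α + 2) / 2) * Complex.Gamma ((α + 2 * k + n) / 2))) * P u := by
  have hnR : (2 : ℝ) ≤ n := by exact_mod_cast hn
  have hk : (0 : ℝ) ≤ k := k.cast_nonneg
  have hG : Complex.Gamma ((α + 2 * k + n) / 2) ≠ 0 :=
    Complex.Gamma_ne_zero_of_re_pos (by simp; linarith)
  have hA := sphereArea_ne_zero hn
  have h1 := integral_sphere_absPow_mul_solidHarmonic hn h hP hu
  have h2 := sphereArea_mul hn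
  have h2ne (z : ℂ) : (2 : ℂ) ^ z ≠ 0 := by simp [Complex.cpow_eq_zero_iff]
  have hexp : (2 : ℂ) ^ ((1 - α) / 2) * 2 ^ ((n : ℂ) / 2 - 1) =
      2 ^ (-(α + k)) * 2 ^ ((α + 2 * k + n) / 2 - 1) * 2 ^ (1 / 2 : ℂ) := by
    simp only [← Complex.cpow_add _ _ (two_ne_zero (α := ℂ))]
    congr 1
    ring
  rw [dualRadonC]
  set I := ∫ ω : Metric.sphere (0 : EuclideanSpace ℝ (Fin n)) 1,
    absPow α k ⟪u, (ω : EuclideanSpace ℝ (Fin n))⟫ * P ω ∂(sphereMeasure n)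
  rw [ridgeMoment] at h1
  rw [one_div, inv_mul_eq_iff_eq_mul₀ hA, div_eq_mul_inv, mul_inv]
  have hc : (2 : ℂ) ^ ((α + 2 * k + n) / 2 - 1) * Complex.Gamma ((α + 2 * k + n) / 2) *
      2 ^ (1 / 2 : ℂ) ≠ 0 := mul_ne_zero (mul_ne_zero (h2ne _) hG) (h2ne _)
  refine mul_right_cancel₀ hc ?_
  rw [← mul_assoc I, h1]
  have hGG := inv_mul_cancel₀ hG
  generalize Complex.Gamma ((α + 2 * k + n) / 2) = G at *
  generalize (2 : ℂ) ^ ((α + 2 * k + n) / 2 - 1) = a at *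
  linear_combination
    (-(P u * Complex.Gamma (α + k + 1) * 2 ^ ((1 - α) / 2) *
      (Complex.Gamma ((α + 2) / 2))⁻¹)) * h2 +
    (P u * Complex.Gamma (α + k + 1) * (Complex.Gamma ((α + 2) / 2))⁻¹ * sphereArea n *
      Complex.Gamma ((n : ℂ) / 2)) * hexp -
    (P u * Complex.Gamma (α + k + 1) * (Complex.Gamma ((α + 2) / 2))⁻¹ * sphereArea n *
      Complex.Gamma ((n : ℂ) / 2) * 2 ^ (-(α + k)) * a * 2 ^ (1 / 2 : ℂ)) * hGG

end Sphere

theorem IsSolidHarmonic.abs_cpow_mul_apply_smul {n k : ℕ} {P : EuclideanSpace ℝ (Fin n) → ℂ}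
    (hP : IsSolidHarmonic k P) (h0 : k ≠ 0 → P 0 = 0) (α : ℂ) (p : ℝ)
    (y : EuclideanSpace ℝ (Fin n)) :
    ((|p| : ℝ) : ℂ) ^ α * P (p • y) = absPow α k p * P y := by
  rcases eq_or_ne p 0 with rfl | hp
  · rcases eq_or_ne k 0 with rfl | hk
    · simp [absPow, hP.eq_const 0 y]
    · simp [absPow, hk, h0 hk]
  · rw [hP.map_real_smul hp, absPow]
    ring

theorem dualRadon_harmonic {n : ℕ} (hn : 2 ≤ n) (k : ℕ)
    (P : EuclideanSpace ℝ (Fin n) → ℂ) (hsmooth : ContDiff ℝ ⊤ P)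
    (hhom : ∀ (r : ℝ), 0 ≤ r → ∀ x, P (r • x) = (r : ℂ) ^ k * P x)
    (hharm : ∀ x, laplacian P x = 0)
    (α : ℂ) (hα : -(k : ℝ) - 1 < α.re) :
    ∀ x : EuclideanSpace ℝ (Fin n),
      dualRadonC n (fun p ω => ((|p| : ℝ) : ℂ) ^ α * P (p • ω)) x =
        (2 ^ (-(α + k)) * Complex.Gamma (α + k + 1) * Complex.Gamma ((n : ℂ) / 2) /
            (Complex.Gamma ((α + 2) / 2) * Complex.Gamma ((α + 2 * k + n) / 2))) *
          ((‖x‖ : ℝ) : ℂ) ^ α * P x := by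
  have hP : IsSolidHarmonic k P :=
    ⟨hsmooth.of_le le_top, fun r hr => hhom r hr.le, hharm⟩
  have h0 : k ≠ 0 → P 0 = 0 := fun hk => by simpa [hk] using hhom 0 le_rfl 0
  intro x
  simp_rw [hP.abs_cpow_mul_apply_smul h0 α]
  rcases eq_or_ne x 0 with rfl | hx
  · rcases eq_or_ne k 0 with rfl | hk
    · rcases eq_or_ne α 0 with rfl | hα0
      · have hu : ‖EuclideanSpace.single (⟨0, by omega⟩ : Fin n) (1 : ℝ)‖ = 1 := by simp
        have h1 := dualRadonC_of_norm_eq_one hn hα hP hu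
        rw [hP.eq_const _ 0] at h1
        simpa [dualRadonC, absPow] using h1
      · simp [dualRadonC, absPow, hα0]
    · simp [dualRadonC, absPow, hk, h0 hk]
  · have hr : 0 < ‖x‖ := norm_pos_iff.2 hx
    have hrC : ((‖x‖ : ℝ) : ℂ) ≠ 0 := by exact_mod_cast hr.ne'
    obtain ⟨u, hxu⟩ : ∃ u, x = ‖x‖ • u := ⟨‖x‖⁻¹ • x, by rw [smul_inv_smul₀ hr.ne']⟩
    have hu : ‖u‖ = 1 := by
      have := congrArg norm hxu
      rw [norm_smul, norm_norm] at this
      exact (mul_eq_left₀ hr.ne').1 this.symm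
    have h1 := dualRadonC_of_norm_eq_one hn hα hP hu
    generalize ‖x‖ = r at hr hrC hxu ⊢
    have h2 : dualRadonC n (fun p ω => absPow α k p * P ω) x =
        (r : ℂ) ^ (α + k) * dualRadonC n (fun p ω => absPow α k p * P ω) u := by
      simp_rw [dualRadonC, hxu, real_inner_smul_left, absPow_mul α k hr, mul_assoc,
        integral_const_mul]
      ring
    rw [h2, h1, hxu, hP.map_smul r hr, Complex.cpow_add _ _ hrC, Complex.cpow_natCast]
    ring
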